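/- Let ω = e^{2πi/3}, Λ = ℤω ⊕ ℤ, ⟨z,w⟩ := Re(z·conj(w)), K = 4π/3, and let F_k be defined via the theta function as below. Let U : ℂ → ℂ be real-analytic with U(z+γ) = e^{i⟨γ,K⟩}U(z) for all γ ∈ Λ and U(ωz) = ωU(z). Let α ∈ ℂ and let u = (u₁,u₂) : ℂ → ℂ² be real-analytic with (D(α)+K)u = 0 on ℂ, satisfying the Floquet condition u₁(z+γ) = e^{−i⟨γ,K⟩}u₁(z) and u₂(z+γ) = e^{i⟨γ,K⟩}u₂(z) for all γ ∈ Λ, and suppose u(z₀) = 0 for some z₀ ∈ ℂ. Then for every k ∈ ℂ there exists a real-analytic v : ℂ → ℂ² such that v(z) = F_k(z−z₀)·u(z) for all z ∉ z₀ + Λ, (D(α)+K+k)v = 0 on all of ℂ, v satisfies the same Floquet condition (v₁(z+γ) = e^{−i⟨γ,K⟩}v₁(z), v₂(z+γ) = e^{i⟨γ,K⟩}v₂(z)), and v is not identically zero whenever u is not identically zero. -/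

import Mathlib

open Complex

noncomputable section

/-- `ω = e^{2πi/3}`. -/
def ω : ℂ := Complex.exp (2 * (Real.pi : ℂ) * Complex.I / 3)

/-- The hexagonal lattice `Λ = ℤω ⊕ ℤ`. -/
def inΛ (γ : ℂ) : Prop := ∃ m n : ℤ, γ = (m : ℂ) * ω + (n : ℂ)

/-- The pairing `⟨z,w⟩ = Re (z ⬝ conj w)`. -/
def pairing (z w : ℂ) : ℝ := (z * (starRingEnd ℂ) w).re

/-- The Dirac momentum `K = 4π/3`. -/
def Kpt : ℂ := 4 * (Real.pi : ℂ) / 3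

/-- The Jacobi theta function `θ₁(z|ω)`. -/
def θ (z : ℂ) : ℂ :=
  -∑' n : ℤ, Complex.exp ((Real.pi : ℂ) * Complex.I * ((n : ℂ) + 1/2)^2 * ω
      + 2 * (Real.pi : ℂ) * Complex.I * ((n : ℂ) + 1/2) * (z + 1/2))

/-- `z(k) = √3 k/(4πi)`. -/
def zmap (k : ℂ) : ℂ := (Real.sqrt 3 : ℂ) * k / (4 * (Real.pi : ℂ) * Complex.I)

/-- `F_k(z) = e^{(i/2)(z - z̄)k} θ(z - z(k))/θ(z)`. -/
def F (k z : ℂ) : ℂ :=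
  Complex.exp ((Complex.I / 2) * (z - (starRingEnd ℂ) z) * k) * θ (z - zmap k) / θ z

/-- `2 D_{z̄} u = -i (∂_x u + i ∂_y u)`. -/
def Dbar2 (u : ℂ → ℂ) : ℂ → ℂ := fun z =>
  -Complex.I * (fderiv ℝ u z 1 + Complex.I * fderiv ℝ u z Complex.I)

/-- Real-analyticity of a map `ℂ ≅ ℝ² → ℂ`. -/
def RealAnalytic (f : ℂ → ℂ) : Prop := ∀ z : ℂ, AnalyticAt ℝ f z


lemma uncurry_aux (n : ℕ) (L : ℂ →L[ℝ] ContinuousMultilinearMap ℝ (fun _ : Fin n => ℂ) ℂ) :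
    ∃ r' : ContinuousMultilinearMap ℝ (fun _ : Fin (n+1) => ℂ) ℂ, ‖r'‖ = ‖L‖ ∧
      ∀ z : ℂ, r' (fun _ => z) = L z (fun _ => z) :=
  ⟨ContinuousLinearMap.uncurryLeft (Ei := fun _ : Fin (n+1) => ℂ) L,
    ContinuousLinearMap.uncurryLeft_norm (Ei := fun _ : Fin (n+1) => ℂ) L, fun _ => rfl⟩

lemma mlin_decomp (n : ℕ) : ∀ p : ContinuousMultilinearMap ℝ (fun _ : Fin (n+1) => ℂ) ℂ,
    ∃ (r : ContinuousMultilinearMap ℝ (fun _ : Fin n => ℂ) ℂ) (c : ℂ),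
      ‖r‖ ≤ (n+1) * ‖p‖ ∧ ‖c‖ ≤ ‖p‖ ∧
      ∀ z : ℂ, p (fun _ => z) = z * r (fun _ => z) + c * (starRingEnd ℂ z)^(n+1) := by
  have key : ∀ (m : ℕ) (p : ContinuousMultilinearMap ℝ (fun _ : Fin (m+1) => ℂ) ℂ),
      ∃ (pa pb : ContinuousMultilinearMap ℝ (fun _ : Fin m => ℂ) ℂ),
        ‖pa‖ ≤ ‖p‖ ∧ ‖pb‖ ≤ ‖p‖ ∧ ∀ z : ℂ, p (fun _ => z) =
          z * pa (fun _ => z) + starRingEnd ℂ z * pb (fun _ => z) := by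
    intro m p
    have h1 : ‖p.curryLeft 1‖ ≤ ‖p‖ := by
      have := p.curryLeft.le_opNorm 1
      simpa using this
    have hI : ‖p.curryLeft I‖ ≤ ‖p‖ := by
      have := p.curryLeft.le_opNorm I
      simpa using this
    refine ⟨(1/2 : ℂ) • (p.curryLeft 1 - I • p.curryLeft I),
      (1/2 : ℂ) • (p.curryLeft 1 + I • p.curryLeft I), ?_, ?_, ?_⟩
    · rw [norm_smul]
      have := norm_sub_le (p.curryLeft 1) (I • p.curryLeft I)
      rw [norm_smul, norm_I, one_mul] at this
      norm_num
      linarith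
    · rw [norm_smul]
      have := norm_add_le (p.curryLeft 1) (I • p.curryLeft I)
      rw [norm_smul, norm_I, one_mul] at this
      norm_num
      linarith
    · intro z
      have e : p (fun _ => z) = p.curryLeft z (fun _ => z) := by
        rw [ContinuousMultilinearMap.curryLeft_apply]
        congr 1
        ext i
        refine Fin.cases ?_ (fun j => ?_) i <;> simp
      have e2 : p.curryLeft z = z.re • p.curryLeft 1 + z.im • p.curryLeft I := by
        rw [← map_smul, ← map_smul, ← map_add]
        congr 1
        apply Complex.ext <;> simp
      rw [e, e2]
      simp only [add_apply, smul_apply,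
        sub_apply, smul_eq_mul, real_smul]
      generalize (p.curryLeft 1) (fun _ => z) = A
      generalize (p.curryLeft I) (fun _ => z) = B
      apply Complex.ext <;> simp <;> ring
  induction n with
  | zero =>
    intro p
    obtain ⟨pa, pb, ha, hb, h⟩ := key 0 p
    refine ⟨pa, pb 0, by simpa using ha, ?_, ?_⟩
    · have := pb.le_opNorm 0
      rw [Fin.prod_univ_zero, mul_one] at this
      exact this.trans hb
    · intro z
      rw [h z, mul_comm (starRingEnd ℂ z)]
      congr 2
      · congr 1; ext i; exact i.elim0
      · simp
  | succ n ih =>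
    intro p
    obtain ⟨pa, pb, ha, hb, h⟩ := key (n+1) p
    obtain ⟨r, c, hr, hc, h'⟩ := ih pb
    let L : ℂ →L[ℝ] ContinuousMultilinearMap ℝ (fun _ : Fin n => ℂ) ℂ :=
      ContinuousLinearMap.smulRight (conjCLE : ℂ →L[ℝ] ℂ) r
    have hL : ‖L‖ ≤ ‖r‖ := by
      apply ContinuousLinearMap.opNorm_le_bound _ (norm_nonneg _)
      intro z
      simp [L, norm_smul, mul_comm]
    obtain ⟨r', hr', hrv⟩ := uncurry_aux n L
    refine ⟨pa + r', c, ?_, hc.trans hb, ?_⟩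
    · have h1 : ‖r'‖ ≤ ‖r‖ := by
        rw [hr']; exact hL
      have := norm_add_le pa r'
      have h3 : ((n:ℝ)+1) * ‖pb‖ ≤ (n+1) * ‖p‖ := by gcongr
      push_cast
      linarith
    · intro z
      have e : r' (fun _ => z) = starRingEnd ℂ z * r (fun _ => z) := by
        rw [hrv]
        simp [L]
      rw [h z, add_apply, e, h' z]
      ring

lemma analytic_decomp {f : ℂ → ℂ} {z₀ : ℂ} (hf : AnalyticAt ℝ f z₀) :
    ∃ g k : ℂ → ℂ, AnalyticAt ℝ g z₀ ∧ AnalyticAt ℂ k 0 ∧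
      ∀ᶠ z in nhds z₀, f z = (z - z₀) * g z + k (starRingEnd ℂ (z - z₀)) := by
  obtain ⟨p, R, hp⟩ := hf
  choose r c hr hc h using fun n => mlin_decomp n (p (n+1))
  obtain ⟨C, a, hC, ha, hpb⟩ : ∃ (C a : ℝ), 0 < C ∧ 0 < a ∧ ∀ n, ‖p n‖ ≤ C * a ^ n := by
    obtain ⟨C, a, hC, ha, h⟩ := p.le_mul_pow_of_radius_pos (hp.r_pos.trans_le hp.r_le)
    exact ⟨C, a, hC, ha, h⟩
  let P : FormalMultilinearSeries ℝ ℂ ℂ := r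
  have hP : 0 < P.radius := by
    have : ((Real.toNNReal (1/(2*a)) : NNReal) : ENNReal) ≤ P.radius := by
      apply P.le_radius_of_bound (C * a)
      intro n
      rw [Real.coe_toNNReal _ (by positivity)]
      have h2 : ((n:ℝ)+1) ≤ 2^n := by
        have : n + 1 ≤ 2^n := Nat.lt_two_pow_self
        exact_mod_cast this
      calc ‖P n‖ * (1/(2*a))^n ≤ ((n+1) * (C * a^(n+1))) * (1/(2*a))^n := by
            gcongr
            exact (hr n).trans (by gcongr; exact hpb _)
        _ ≤ (2^n * (C * a^(n+1))) * (1/(2*a))^n := by gcongr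
        _ = C * a := by
            rw [div_pow, mul_pow, pow_succ]; field_simp; simp
    refine lt_of_lt_of_le ?_ this
    simpa using ha
  let Q : FormalMultilinearSeries ℂ ℂ ℂ := FormalMultilinearSeries.ofScalars ℂ
    (fun n => Nat.casesOn n (f z₀) c)
  have hQ : 0 < Q.radius := by
    have : ((Real.toNNReal (1/a) : NNReal) : ENNReal) ≤ Q.radius := by
      apply Q.le_radius_of_bound (‖f z₀‖ + C)
      intro n
      rw [Real.coe_toNNReal _ (by positivity)]
      simp only [Q]
      rw [FormalMultilinearSeries.ofScalars_norm]
      cases n with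
      | zero => simp; positivity
      | succ n =>
        calc ‖c n‖ * (1/a)^(n+1) ≤ (C * a^(n+1)) * (1/a)^(n+1) := by
              gcongr
              exact (hc n).trans (hpb _)
          _ = C := by rw [div_pow]; field_simp; simp
          _ ≤ _ := by simp
    refine lt_of_lt_of_le ?_ this
    simpa using ha
  refine ⟨fun z => P.sum (z - z₀), Q.sum, ?_, ?_, ?_⟩
  · have h0 : AnalyticAt ℝ P.sum ((fun z => z - z₀) z₀) := by
      simpa using (P.hasFPowerSeriesOnBall hP).analyticAt
    exact h0.comp (f := fun z => z - z₀) (by fun_prop)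
  · exact (Q.hasFPowerSeriesOnBall hQ).analyticAt
  · have t : Filter.Tendsto (fun z : ℂ => z - z₀) (nhds z₀) (nhds 0) := by
      have : Continuous (fun z : ℂ => z - z₀) := by fun_prop
      simpa using this.tendsto z₀
    have t2 : Filter.Tendsto (fun z : ℂ => starRingEnd ℂ (z - z₀)) (nhds z₀) (nhds 0) := by
      have : Continuous (fun z : ℂ => starRingEnd ℂ (z - z₀)) := by fun_prop
      simpa using this.tendsto z₀
    filter_upwards [t (Metric.eball_mem_nhds 0 hP), t (Metric.eball_mem_nhds 0 hp.r_pos),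
      t2 (Metric.eball_mem_nhds 0 hQ)] with z h1 h2 h3
    have s1 := P.hasSum h1
    have s2 := hp.hasSum h2
    have s3 := Q.hasSum h3
    simp only [add_sub_cancel] at s2
    have s3' := (hasSum_nat_add_iff' 1).2 s3
    have s2' := (hasSum_nat_add_iff' 1).2 s2
    have s4 := (s1.mul_left (z - z₀)).add s3'
    have e : f z - ∑ i ∈ Finset.range 1, (p i fun _ => z - z₀) =
       (z - z₀) * P.sum (z - z₀) + (Q.sum ((starRingEnd ℂ) (z - z₀)) - ∑ i ∈ Finset.range 1, (Q i fun _ => (starRingEnd ℂ) (z - z₀))) := by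
      refine s2'.unique ?_
      refine s4.congr_fun (fun n => ?_)
      rw [h n]
      simp [P, Q, FormalMultilinearSeries.ofScalars, pow_succ']
    have e0 : p 0 (fun _ => z - z₀) = f z₀ := hp.coeff_zero _
    have e1 : (Q 0 fun _ => (starRingEnd ℂ) (z - z₀)) = f z₀ := by
      simp [Q, FormalMultilinearSeries.ofScalars]
    simp only [Finset.range_one, Finset.sum_singleton, e0, e1] at e
    linear_combination e

lemma dbar_congr {f g : ℂ → ℂ} {z : ℂ} (h : f =ᶠ[nhds z] g) : Dbar2 f =ᶠ[nhds z] Dbar2 g := by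
  filter_upwards [h.fderiv (𝕜 := ℝ)] with w hw
  simp only [Dbar2, hw]

lemma dbar_analytic {f : ℂ → ℂ} {z : ℂ} (h : AnalyticAt ℝ f z) : AnalyticAt ℝ (Dbar2 f) z := by
  have h1 : ∀ v : ℂ, AnalyticAt ℝ (fun w => fderiv ℝ f w v) z := fun v =>
    (ContinuousLinearMap.apply ℝ ℂ v).analyticAt _ |>.comp h.fderiv
  exact analyticAt_const.mul ((h1 1).add (analyticAt_const.mul (h1 I)))

lemma dbar_add {f g : ℂ → ℂ} {z : ℂ} (hf : DifferentiableAt ℝ f z) (hg : DifferentiableAt ℝ g z) :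
    Dbar2 (fun w => f w + g w) z = Dbar2 f z + Dbar2 g z := by
  simp only [Dbar2]
  rw [fderiv_fun_add hf hg]
  simp only [add_apply]
  ring

lemma dbar_mul {f g : ℂ → ℂ} {z : ℂ} (hf : DifferentiableAt ℝ f z) (hg : DifferentiableAt ℝ g z) :
    Dbar2 (fun w => f w * g w) z = Dbar2 f z * g z + f z * Dbar2 g z := by
  simp only [Dbar2]
  rw [fderiv_fun_mul hf hg]
  simp only [add_apply, smul_apply, smul_eq_mul]
  ring

lemma dbar_holo {f : ℂ → ℂ} {z : ℂ} (hf : DifferentiableAt ℂ f z) : Dbar2 f z = 0 := by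
  simp only [Dbar2]
  rw [hf.fderiv_restrictScalars ℝ]
  have : fderiv ℂ f z I = I * fderiv ℂ f z 1 := by
    conv_lhs => rw [show (I : ℂ) = I • (1 : ℂ) by simp]
    rw [map_smul, smul_eq_mul]
  simp only [ContinuousLinearMap.coe_restrictScalars', this]
  linear_combination (-I * fderiv ℂ f z 1) * I_mul_I

lemma dbar_antiholo {k : ℂ → ℂ} {z z₀ : ℂ} (hk : DifferentiableAt ℂ k (starRingEnd ℂ (z - z₀))) :
    Dbar2 (fun w => k (starRingEnd ℂ (w - z₀))) z =
      -2 * I * deriv k (starRingEnd ℂ (z - z₀)) := by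
  have h1 : HasFDerivAt (fun w : ℂ => starRingEnd ℂ (w - z₀)) (conjCLE : ℂ →L[ℝ] ℂ) z := by
    have := (conjCLE : ℂ →L[ℝ] ℂ).hasFDerivAt (x := z - z₀)
    exact HasFDerivAt.comp (f := fun w => w - z₀) z this ((hasFDerivAt_id z).sub_const z₀)
  have h2 := (hk.hasFDerivAt.restrictScalars ℝ).comp z h1
  have h3 := h2.fderiv
  have e : (fun w => k (starRingEnd ℂ (w - z₀))) = k ∘ (fun w : ℂ => starRingEnd ℂ (w - z₀)) := rfl
  have h4 : ∀ v : ℂ, fderiv ℂ k (starRingEnd ℂ (z - z₀)) v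
      = v * deriv k (starRingEnd ℂ (z - z₀)) := by
    intro v
    rw [← fderiv_apply_one_eq_deriv]
    conv_lhs => rw [show v = v • (1 : ℂ) by simp]
    rw [map_smul, smul_eq_mul]
  simp only [Dbar2]
  rw [e, h3]
  simp only [ContinuousLinearMap.comp_apply, ContinuousLinearMap.coe_restrictScalars', h4]
  simp
  linear_combination (-I * deriv k (starRingEnd ℂ z - starRingEnd ℂ z₀)) * I_mul_I

lemma dbar_iter (z₀ : ℂ) (n : ℕ) : ∀ (f g k : ℂ → ℂ) (c : ℂ), AnalyticAt ℝ g z₀ →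
    AnalyticAt ℂ k 0 →
    (f =ᶠ[nhds z₀] fun z => (z - z₀) * g z + c * k (starRingEnd ℂ (z - z₀))) →
    Dbar2^[n] f z₀ = c * (-2 * I)^n * iteratedDeriv n k 0 := by
  induction n with
  | zero =>
    intro f g k c hg hk h
    simpa using h.eq_of_nhds
  | succ n ih =>
    intro f g k c hg hk h
    rw [Function.iterate_succ_apply, iteratedDeriv_succ']
    rw [ih (Dbar2 f) (Dbar2 g) (deriv k) (c * (-2 * I)) (dbar_analytic hg) hk.deriv ?_]
    · ring
    refine (dbar_congr h).trans ?_
    have t2 : Filter.Tendsto (fun z : ℂ => starRingEnd ℂ (z - z₀)) (nhds z₀) (nhds 0) := by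
      have : Continuous (fun z : ℂ => starRingEnd ℂ (z - z₀)) := by fun_prop
      simpa using this.tendsto z₀
    filter_upwards [hg.eventually_analyticAt, t2.eventually hk.eventually_analyticAt] with z h1 h2
    have d1 : DifferentiableAt ℝ (fun w : ℂ => w - z₀) z := by fun_prop
    have d3 : DifferentiableAt ℝ (fun w => k (starRingEnd ℂ (w - z₀))) z := by
      have a : DifferentiableAt ℝ (fun w : ℂ => starRingEnd ℂ (w - z₀)) z :=
        (conjCLE : ℂ →L[ℝ] ℂ).differentiableAt.comp z d1
      exact (h2.differentiableAt.restrictScalars ℝ).comp z a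
    have d4 : DifferentiableAt ℝ (fun _ : ℂ => c) z := by fun_prop
    rw [dbar_add (d1.fun_mul h1.differentiableAt) (d4.fun_mul d3), dbar_mul d1 h1.differentiableAt,
      dbar_mul d4 d3, dbar_antiholo h2.differentiableAt, dbar_holo (f := fun _ => c) (by fun_prop),
      dbar_holo (f := fun w => w - z₀) (by fun_prop)]
    ring

lemma divis {f : ℂ → ℂ} {z₀ : ℂ} (hf : AnalyticAt ℝ f z₀) (h : ∀ n, Dbar2^[n] f z₀ = 0) :
    ∃ g : ℂ → ℂ, AnalyticAt ℝ g z₀ ∧ ∀ᶠ z in nhds z₀, f z = (z - z₀) * g z := by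
  obtain ⟨g, k, hg, hk, e⟩ := analytic_decomp hf
  refine ⟨g, hg, ?_⟩
  have hd : ∀ n, iteratedDeriv n k 0 = 0 := by
    intro n
    have := dbar_iter z₀ n f g k 1 hg hk (by simp only [one_mul]; exact e)
    rw [h n] at this
    simpa using this.symm
  have hk0 : ∀ᶠ w in nhds 0, k w = 0 := by
    have := hk.hasFPowerSeriesAt
    simp only [hd] at this
    have h2 : (FormalMultilinearSeries.ofScalars ℂ fun n : ℕ => (0:ℂ) / (n.factorial : ℂ)) = 0 := by
      ext n
      simp [FormalMultilinearSeries.ofScalars]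
    rw [h2] at this
    exact this.eventually_eq_zero
  have t2 : Filter.Tendsto (fun z : ℂ => starRingEnd ℂ (z - z₀)) (nhds z₀) (nhds 0) := by
    have : Continuous (fun z : ℂ => starRingEnd ℂ (z - z₀)) := by fun_prop
    simpa using this.tendsto z₀
  filter_upwards [e, t2.eventually hk0] with z h1 h2
  rw [h1, h2, add_zero]

lemma sys_vanish (V W u₁ u₂ : ℂ → ℂ) (κ : ℂ) (hV : RealAnalytic V) (hW : RealAnalytic W)
    (h1 : RealAnalytic u₁) (h2 : RealAnalytic u₂)
    (e1 : ∀ z, Dbar2 u₁ z + V z * u₂ z + κ * u₁ z = 0)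
    (e2 : ∀ z, W z * u₁ z + Dbar2 u₂ z + κ * u₂ z = 0) (z₀ : ℂ)
    (h0 : u₁ z₀ = 0 ∧ u₂ z₀ = 0) (n : ℕ) : ∀ a b : ℂ → ℂ, RealAnalytic a → RealAnalytic b →
    Dbar2^[n] (fun z => a z * u₁ z + b z * u₂ z) z₀ = 0 := by
  induction n with
  | zero => intro a b _ _; simp [h0.1, h0.2]
  | succ n ih =>
    intro a b ha hb
    rw [Function.iterate_succ_apply]
    have := ih (fun z => Dbar2 a z - κ * a z - b z * W z) (fun z => Dbar2 b z - κ * b z - a z * V z)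
      (fun z => ((dbar_analytic (ha z)).sub (analyticAt_const.mul (ha z))).sub ((hb z).mul (hW z)))
      (fun z => ((dbar_analytic (hb z)).sub (analyticAt_const.mul (hb z))).sub ((ha z).mul (hV z)))
    convert this using 2
    ext z
    have da := (ha z).differentiableAt
    have db := (hb z).differentiableAt
    have d1 := (h1 z).differentiableAt
    have d2 := (h2 z).differentiableAt
    rw [dbar_add (da.fun_mul d1) (db.fun_mul d2), dbar_mul da d1, dbar_mul db d2]
    linear_combination a z * e1 z + b z * e2 z

lemma sys_divis (V W u₁ u₂ : ℂ → ℂ) (κ : ℂ) (hV : RealAnalytic V) (hW : RealAnalytic W)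
    (h1 : RealAnalytic u₁) (h2 : RealAnalytic u₂)
    (e1 : ∀ z, Dbar2 u₁ z + V z * u₂ z + κ * u₁ z = 0)
    (e2 : ∀ z, W z * u₁ z + Dbar2 u₂ z + κ * u₂ z = 0) (z₀ : ℂ)
    (h0 : u₁ z₀ = 0 ∧ u₂ z₀ = 0) :
    (∃ g : ℂ → ℂ, AnalyticAt ℝ g z₀ ∧ ∀ᶠ z in nhds z₀, u₁ z = (z - z₀) * g z) ∧
    (∃ g : ℂ → ℂ, AnalyticAt ℝ g z₀ ∧ ∀ᶠ z in nhds z₀, u₂ z = (z - z₀) * g z) := by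
  constructor
  · refine divis (h1 z₀) (fun n => ?_)
    simpa using sys_vanish V W u₁ u₂ κ hV hW h1 h2 e1 e2 z₀ h0 n (fun _ => 1) (fun _ => 0)
      (fun _ => analyticAt_const) (fun _ => analyticAt_const)
  · refine divis (h2 z₀) (fun n => ?_)
    simpa using sys_vanish V W u₁ u₂ κ hV hW h1 h2 e1 e2 z₀ h0 n (fun _ => 0) (fun _ => 1)
      (fun _ => analyticAt_const) (fun _ => analyticAt_const)

lemma ω_eq : ω = -1/2 + (Real.sqrt 3 / 2 : ℝ) * I := by
  have h : (2 * (Real.pi : ℂ) * I / 3) = ((2 * Real.pi / 3 : ℝ) : ℂ) * I := by push_cast; ring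
  rw [ω, h, exp_mul_I, ← ofReal_cos, ← ofReal_sin]
  have e : 2 * Real.pi / 3 = Real.pi - Real.pi / 3 := by ring
  rw [e, Real.cos_pi_sub, Real.sin_pi_sub, Real.cos_pi_div_three, Real.sin_pi_div_three]
  push_cast; ring

lemma ω_im : ω.im = Real.sqrt 3 / 2 := by rw [ω_eq]; simp

lemma ω_im_pos : 0 < ω.im := by rw [ω_im]; positivity

lemma θ_term (z : ℂ) (n : ℤ) :
    Complex.exp ((Real.pi : ℂ) * Complex.I * ((n : ℂ) + 1/2)^2 * ω
      + 2 * (Real.pi : ℂ) * Complex.I * ((n : ℂ) + 1/2) * (z + 1/2)) =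
    Complex.exp ((Real.pi : ℂ) * I * (ω / 4 + z + 1/2)) * jacobiTheta₂_term n (z + 1/2 + ω/2) ω := by
  rw [jacobiTheta₂_term, ← Complex.exp_add]
  congr 1
  ring

lemma θ_hasSum (z : ℂ) : HasSum (fun n : ℤ => Complex.exp ((Real.pi : ℂ) * Complex.I * ((n : ℂ) + 1/2)^2 * ω
      + 2 * (Real.pi : ℂ) * Complex.I * ((n : ℂ) + 1/2) * (z + 1/2))) (-θ z) := by
  rw [θ, neg_neg]
  apply Summable.hasSum
  simp only [θ_term]
  exact ((summable_jacobiTheta₂_term_iff _ _).2 ω_im_pos).mul_left _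

lemma θ_eq (z : ℂ) : θ z = -(Complex.exp ((Real.pi : ℂ) * I * (ω / 4 + z + 1/2)) *
    jacobiTheta₂ (z + 1/2 + ω/2) ω) := by
  rw [θ]
  simp only [θ_term]
  rw [tsum_mul_left, jacobiTheta₂]

lemma θ_diff : Differentiable ℂ θ := by
  intro z
  have : θ = fun z => -(Complex.exp ((Real.pi : ℂ) * I * (ω / 4 + z + 1/2)) *
    jacobiTheta₂ (z + 1/2 + ω/2) ω) := funext θ_eq
  rw [this]
  have h : DifferentiableAt ℂ (fun z => jacobiTheta₂ (z + 1/2 + ω/2) ω) z :=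
    (differentiableAt_jacobiTheta₂_fst (z + 1/2 + ω/2) ω_im_pos).comp z
      (f := fun z => z + 1/2 + ω/2) (by fun_prop)
  fun_prop

lemma θ_add_one (z : ℂ) : θ (z + 1) = -θ z := by
  rw [θ_eq, θ_eq, show z + 1 + 1/2 + ω/2 = z + 1/2 + ω/2 + 1 by ring, jacobiTheta₂_add_left,
    show (Real.pi : ℂ) * I * (ω / 4 + (z + 1) + 1/2) = Real.pi * I * (ω / 4 + z + 1/2) + Real.pi * I by ring,
    Complex.exp_add, exp_pi_mul_I]
  ring

lemma θ_add_ω (z : ℂ) : θ (z + ω) = -(Complex.exp (-(Real.pi : ℂ) * I * (ω + 2 * z)) * θ z) := by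
  rw [θ_eq, θ_eq, show z + ω + 1/2 + ω/2 = z + 1/2 + ω/2 + ω by ring, jacobiTheta₂_add_left']
  have : Complex.exp ((Real.pi : ℂ) * I * (ω / 4 + (z + ω) + 1/2)) *
      Complex.exp (-(Real.pi : ℂ) * I * (ω + 2 * (z + 1/2 + ω/2))) =
      -(Complex.exp (-(Real.pi : ℂ) * I * (ω + 2 * z)) * Complex.exp ((Real.pi : ℂ) * I * (ω / 4 + z + 1/2))) := by
    have hx : Complex.exp (-(Real.pi * I)) = -1 := exp_neg_pi_mul_I
    rw [← neg_one_mul (Complex.exp _ * _), ← hx, ← Complex.exp_add, ← Complex.exp_add, ← Complex.exp_add]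
    congr 1
    ring
  linear_combination (-jacobiTheta₂ (z + 1/2 + ω/2) ω) * this

lemma sin_add_nat_mul_pi' (x : ℂ) (n : ℕ) :
    Complex.sin (x + n * Real.pi) = (-1)^n * Complex.sin x := by
  induction n with
  | zero => simp
  | succ n ih =>
    rw [show x + ((n + 1 : ℕ) : ℂ) * Real.pi = x + n * Real.pi + Real.pi by push_cast; ring,
      Complex.sin_add_pi, ih]
    ring

lemma θ_sin (z : ℂ) : HasSum (fun n : ℕ => 2 * Complex.exp ((Real.pi : ℂ) * I * ((n : ℂ) + 1/2)^2 * ω) *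
    (-1)^n * Complex.sin ((2 * n + 1) * (Real.pi * z))) (θ z) := by
  have h := (θ_hasSum z).nat_add_neg_add_one.neg
  rw [neg_neg] at h
  refine h.congr_fun (fun n => ?_)
  have e1 : ((-((n:ℤ) + 1) : ℤ) : ℂ) = -(n:ℂ) - 1 := by push_cast; ring
  have e2 : (((n:ℤ)) : ℂ) = (n:ℂ) := by push_cast; ring
  rw [e1, e2]
  have e3 : ((Real.pi : ℂ) * Complex.I * ((-(n:ℂ) - 1) + 1/2)^2 * ω
      + 2 * (Real.pi : ℂ) * Complex.I * ((-(n:ℂ) - 1) + 1/2) * (z + 1/2)) =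
      (Real.pi : ℂ) * Complex.I * ((n:ℂ) + 1/2)^2 * ω +
      (-((2 * n + 1) * (Real.pi * z) + (n * Real.pi + Real.pi / 2)) * I) := by ring
  have e4 : ((Real.pi : ℂ) * Complex.I * ((n:ℂ) + 1/2)^2 * ω
      + 2 * (Real.pi : ℂ) * Complex.I * ((n:ℂ) + 1/2) * (z + 1/2)) =
      (Real.pi : ℂ) * Complex.I * ((n:ℂ) + 1/2)^2 * ω +
      (((2 * n + 1) * (Real.pi * z) + (n * Real.pi + Real.pi / 2)) * I) := by ring
  rw [e3, e4, Complex.exp_add, Complex.exp_add, ← mul_add, ← Complex.two_cos]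
  have e5 : Complex.cos ((2 * n + 1) * (Real.pi * z) + (n * Real.pi + Real.pi / 2)) =
      -((-1)^n * Complex.sin ((2 * n + 1) * (Real.pi * z))) := by
    rw [← add_assoc, Complex.cos_add_pi_div_two, sin_add_nat_mul_pi']
  rw [e5]
  ring

lemma norm_exp_I_le (w : ℂ) : ‖Complex.exp (w * I)‖ ≤ Real.exp |w.im| := by
  rw [Complex.norm_exp]
  simp
  exact neg_le_abs _

lemma norm_cos_le' (w : ℂ) : ‖Complex.cos w‖ ≤ Real.exp |w.im| := by
  rw [Complex.cos, norm_div]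
  have h1 := norm_exp_I_le w
  have h2 := norm_exp_I_le (-w)
  have h3 := norm_add_le (Complex.exp (w * I)) (Complex.exp (-w * I))
  simp only [neg_im, abs_neg] at h2
  rw [Complex.norm_two]
  linarith

lemma norm_sin_mul_le (w : ℂ) (n : ℕ) :
    ‖Complex.sin ((2 * n + 1) * w)‖ ≤ (2 * n + 1) * Real.exp (2 * n * |w.im|) * ‖Complex.sin w‖ := by
  induction n with
  | zero => simp
  | succ n ih =>
    have e : (2 * ((n + 1 : ℕ) : ℂ) + 1) * w = (2 * n + 1) * w + 2 * w := by push_cast; ring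
    rw [e, Complex.sin_add, Complex.sin_two_mul]
    have c1 := norm_cos_le' (2 * w)
    have c2 := norm_cos_le' w
    have c3 := norm_cos_le' ((2 * n + 1) * w)
    have i1 : (2 * w).im = 2 * w.im := by simp
    have i2 : ((2 * (n:ℂ) + 1) * w).im = (2 * n + 1) * w.im := by simp
    rw [i1, abs_mul, abs_two] at c1
    rw [i2, abs_mul, abs_of_pos (by positivity : (0:ℝ) < 2 * n + 1)] at c3
    calc _ ≤ ‖Complex.sin ((2 * n + 1) * w)‖ * ‖Complex.cos (2 * w)‖ +
          ‖Complex.cos ((2 * n + 1) * w)‖ * (2 * ‖Complex.sin w‖ * ‖Complex.cos w‖) := by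
            refine (norm_add_le _ _).trans ?_
            simp
      _ ≤ ((2 * n + 1) * Real.exp (2 * n * |w.im|) * ‖Complex.sin w‖) * Real.exp (2 * |w.im|) +
          Real.exp ((2 * n + 1) * |w.im|) * (2 * ‖Complex.sin w‖ * Real.exp |w.im|) := by
            gcongr
      _ = _ := by
        have a1 : Real.exp (2 * ((n+1 : ℕ):ℝ) * |w.im|) = Real.exp (2 * n * |w.im|) * Real.exp (2 * |w.im|) := by
          rw [← Real.exp_add]; congr 1; push_cast; ring
        have a2 : Real.exp (2 * ((n+1 : ℕ):ℝ) * |w.im|) = Real.exp ((2 * n + 1) * |w.im|) * Real.exp (|w.im|) := by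
          rw [← Real.exp_add]; congr 1; push_cast; ring
        have : (2 * ((n+1 : ℕ):ℝ) + 1) * Real.exp (2 * ((n+1 : ℕ):ℝ) * |w.im|) =
          (2 * n + 1) * (Real.exp (2 * n * |w.im|) * Real.exp (2 * |w.im|)) +
          2 * (Real.exp ((2 * n + 1) * |w.im|) * Real.exp (|w.im|)) := by
          rw [← a1, ← a2]; push_cast; ring
        rw [this]; ring

lemma rho_le : Real.exp (-(Real.pi * (Real.sqrt 3 / 2))) ≤ 1/8 := by
  have h3 : (1.7:ℝ) ≤ Real.sqrt 3 := Real.le_sqrt_of_sq_le (by norm_num)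
  have hp := Real.pi_gt_three
  have h : (2.5:ℝ) ≤ Real.pi * (Real.sqrt 3 / 2) := by nlinarith
  have h1 : (8:ℝ) ≤ Real.exp (Real.pi * (Real.sqrt 3 / 2)) := by
    calc (8:ℝ) ≤ (1/4 + 1)^10 := by norm_num
      _ ≤ (Real.exp (1/4))^10 := by gcongr; exact Real.add_one_le_exp _
      _ = Real.exp 2.5 := by rw [← Real.exp_nat_mul]; norm_num
      _ ≤ _ := Real.exp_le_exp.2 h
  rw [Real.exp_neg, one_div]
  exact inv_anti₀ (by norm_num) h1

lemma θ_lower {z : ℂ} (hz : |z.im| ≤ Real.sqrt 3 / 4) :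
    (4/5) * Real.exp (-(Real.pi * Real.sqrt 3 / 8)) * ‖Complex.sin (Real.pi * z)‖ ≤ ‖θ z‖ := by
  set E := Real.exp (-(Real.pi * Real.sqrt 3 / 8)) with hE
  have nA : ∀ n : ℕ, ‖Complex.exp ((Real.pi : ℂ) * I * ((n : ℂ) + 1/2)^2 * ω)‖ =
      Real.exp (-(Real.pi * (Real.sqrt 3 / 2) * (n + 1/2)^2)) := by
    intro n
    rw [Complex.norm_exp]
    congr 1
    have : (Real.pi : ℂ) * I * ((n : ℂ) + 1/2)^2 * ω = ((Real.pi * ((n:ℝ)+1/2)^2 : ℝ) : ℂ) * (I * ω) := by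
      push_cast; ring
    rw [this, re_ofReal_mul]
    simp [ω_im]
    ring
  have h := θ_sin z
  have h' := (hasSum_nat_add_iff' 1).2 h
  have hg : HasSum (fun n : ℕ => 2 * E * ‖Complex.sin (Real.pi * z)‖ * (3/8) * (3/8:ℝ)^n)
      (2 * E * ‖Complex.sin (Real.pi * z)‖ * (3/8) * (1 - 3/8)⁻¹) :=
    (hasSum_geometric_of_lt_one (by norm_num) (by norm_num)).mul_left _
  have hb := h'.norm_le_of_bounded hg ?_
  · simp only [Finset.range_one, Finset.sum_singleton] at hb
    have t0 := nA 0
    have e0 : Real.pi * (Real.sqrt 3 / 2) * (((0:ℕ):ℝ) + 1/2)^2 = Real.pi * Real.sqrt 3 / 8 := by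
      push_cast; ring
    rw [e0, ← hE] at t0
    have := norm_sub_norm_le (2 * Complex.exp ((Real.pi : ℂ) * I * (((0:ℕ) : ℂ) + 1/2)^2 * ω) *
      (-1)^0 * Complex.sin ((2 * (0:ℕ) + 1) * (Real.pi * z))) (θ z)
    rw [norm_sub_rev] at this
    have e1 : ‖2 * Complex.exp ((Real.pi : ℂ) * I * (((0:ℕ) : ℂ) + 1/2)^2 * ω) *
      (-1)^0 * Complex.sin ((2 * (0:ℕ) + 1) * (Real.pi * z))‖ = 2 * E * ‖Complex.sin (Real.pi * z)‖ := by
      rw [norm_mul, norm_mul, norm_mul, t0]; simp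
    rw [e1] at this
    norm_num at hb this ⊢
    linarith
  · intro n
    rw [norm_mul, norm_mul, norm_mul, nA, norm_pow, norm_neg, norm_one, one_pow, mul_one]
    have s := norm_sin_mul_le (Real.pi * z) (n+1)
    have im : ((Real.pi : ℂ) * z).im = Real.pi * z.im := by simp
    rw [im, abs_mul, abs_of_pos Real.pi_pos] at s
    have hpi := Real.pi_pos
    have h3 : 0 < Real.sqrt 3 := by positivity
    have hex : Real.exp (-(Real.pi * (Real.sqrt 3 / 2) * (((n+1 : ℕ):ℝ) + 1/2)^2)) *
        Real.exp (2 * ((n+1 : ℕ):ℝ) * (Real.pi * |z.im|)) ≤ E * (1/8)^(n+1) := by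
      calc _ ≤ E * Real.exp (-(Real.pi * (Real.sqrt 3 / 2)))^(n+1) := by
            rw [hE, ← Real.exp_nat_mul, ← Real.exp_add, ← Real.exp_add]
            apply Real.exp_le_exp.2
            have q1 : ((n+1 : ℕ):ℝ) * Real.pi * |z.im| ≤ ((n+1 : ℕ):ℝ) * Real.pi * (Real.sqrt 3 / 4) := by
              gcongr
            have q2 : (0:ℝ) ≤ Real.pi * Real.sqrt 3 * (((n+1 : ℕ):ℝ) * ((n+1 : ℕ):ℝ) - ((n+1 : ℕ):ℝ)) := by
              have : (1:ℝ) ≤ ((n+1 : ℕ):ℝ) := by push_cast; linarith [Nat.cast_nonneg (α := ℝ) n]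
              have : 0 ≤ (((n+1 : ℕ):ℝ) * ((n+1 : ℕ):ℝ) - ((n+1 : ℕ):ℝ)) := by nlinarith
              positivity
            linarith
        _ ≤ _ := by gcongr; exact rho_le
    have h3n : (2 * ((n+1 : ℕ):ℝ) + 1) ≤ 3^(n+1) := by
      have := one_add_mul_le_pow (by norm_num : (-2:ℝ) ≤ 2) (n+1)
      norm_num at this ⊢
      linarith
    calc _ ≤ ‖(2:ℂ)‖ * Real.exp (-(Real.pi * (Real.sqrt 3 / 2) * (((n+1 : ℕ):ℝ) + 1/2)^2)) *
          ((2 * ((n+1 : ℕ):ℝ) + 1) * Real.exp (2 * ((n+1 : ℕ):ℝ) * (Real.pi * |z.im|)) * ‖Complex.sin (Real.pi * z)‖) := by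
            gcongr
      _ = 2 * ‖Complex.sin (Real.pi * z)‖ * (2 * ((n+1 : ℕ):ℝ) + 1) * (Real.exp (-(Real.pi * (Real.sqrt 3 / 2) * (((n+1 : ℕ):ℝ) + 1/2)^2)) *
        Real.exp (2 * ((n+1 : ℕ):ℝ) * (Real.pi * |z.im|))) := by
            rw [Complex.norm_two]; ring
      _ ≤ 2 * ‖Complex.sin (Real.pi * z)‖ * 3^(n+1) * (E * (1/8)^(n+1)) := by gcongr
      _ = _ := by
        have : (3/8:ℝ)^n = 3^n * (1/8)^n := by rw [← mul_pow]; norm_num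
        rw [this]; ring

lemma θ_zero : θ 0 = 0 := by
  have := θ_sin 0
  simp at this
  exact this.unique hasSum_zero |> fun h => by simpa using h

lemma θ_per_one : Function.Periodic (fun z => θ z = 0) 1 := by
  intro z
  simp only [θ_add_one, neg_eq_zero]

lemma θ_per_ω : Function.Periodic (fun z => θ z = 0) ω := by
  intro z
  simp [θ_add_ω]

lemma θ_ne {z : ℂ} (h : ¬ inΛ z) : θ z ≠ 0 := by
  intro h0
  apply h
  set m : ℤ := round (z.im / (Real.sqrt 3 / 2)) with hm
  have p := (θ_per_ω.int_mul (-m)) z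
  simp only [eq_iff_iff] at p
  have h1 := p.2 h0
  have him : |(z + ((-m : ℤ):ℂ) * ω).im| ≤ Real.sqrt 3 / 4 := by
    have hr := abs_sub_round (z.im / (Real.sqrt 3 / 2))
    rw [← hm] at hr
    have h3 : 0 < Real.sqrt 3 / 2 := by positivity
    have e : (z + ((-m : ℤ):ℂ) * ω).im = (z.im / (Real.sqrt 3 / 2) - m) * (Real.sqrt 3 / 2) := by
      simp [ω_im]
      field_simp
      ring
    rw [e, abs_mul, abs_of_pos h3]
    nlinarith
  have lo := θ_lower him
  rw [h1, norm_zero] at lo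
  have hE := Real.exp_pos (-(Real.pi * Real.sqrt 3 / 8))
  have s0 : Complex.sin (Real.pi * (z + ((-m : ℤ):ℂ) * ω)) = 0 := by
    rw [← norm_eq_zero]
    refine le_antisymm ?_ (norm_nonneg _)
    by_contra hc
    push Not at hc
    have : 0 < (4/5) * Real.exp (-(Real.pi * Real.sqrt 3 / 8)) * ‖Complex.sin (Real.pi * (z + ((-m : ℤ):ℂ) * ω))‖ := by positivity
    linarith
  rw [Complex.sin_eq_zero_iff] at s0
  obtain ⟨n, hn⟩ := s0
  have hpi : (Real.pi : ℂ) ≠ 0 := by exact_mod_cast Real.pi_ne_zero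
  refine ⟨m, n, ?_⟩
  have : (z + ((-m : ℤ):ℂ) * ω) = n := by
    apply mul_left_cancel₀ hpi
    rw [hn]; ring
  push_cast at this
  linear_combination this

lemma θ_deriv : deriv θ 0 ≠ 0 := by
  have h := (θ_diff 0).hasDerivAt
  have hs : HasDerivAt (fun z : ℂ => Complex.sin (Real.pi * z)) Real.pi 0 := by
    have := ((hasDerivAt_id (0:ℂ)).const_mul (Real.pi : ℂ)).csin
    simpa using this
  rw [hasDerivAt_iff_tendsto_slope_zero] at h hs
  have h1 := h.norm
  have h2 := hs.norm.const_mul ((4/5) * Real.exp (-(Real.pi * Real.sqrt 3 / 8)))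
  have hE := Real.exp_pos (-(Real.pi * Real.sqrt 3 / 8))
  have ev : ∀ᶠ t : ℂ in nhdsWithin 0 {0}ᶜ, |t.im| ≤ Real.sqrt 3 / 4 := by
    apply Filter.Eventually.filter_mono nhdsWithin_le_nhds
    have c : Continuous (fun t : ℂ => |t.im|) := by fun_prop
    have := c.tendsto 0
    simp only [zero_im, abs_zero] at this
    exact this.eventually_le_const (by positivity)
  have := le_of_tendsto_of_tendsto h2 h1 ?_
  · intro h0
    rw [h0] at this
    simp only [norm_zero] at this
    have hp : 0 < ‖(Real.pi : ℂ)‖ := by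
      rw [norm_pos_iff]; exact_mod_cast Real.pi_ne_zero
    have : 0 < (4/5) * Real.exp (-(Real.pi * Real.sqrt 3 / 8)) * ‖(Real.pi : ℂ)‖ := by positivity
    linarith
  · filter_upwards [ev] with t ht
    have := θ_lower ht
    simp only [zero_add, θ_zero, sub_zero, mul_zero, Complex.sin_zero, norm_smul]
    calc _ = ‖t⁻¹‖ * ((4/5) * Real.exp (-(Real.pi * Real.sqrt 3 / 8)) * ‖Complex.sin (Real.pi * t)‖) := by ring
      _ ≤ _ := by gcongr

lemma θ_ev_ne (a z : ℂ) : ∀ᶠ w in nhdsWithin z {z}ᶜ, θ (w - a) ≠ 0 := by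
  have hd : Differentiable ℂ (fun w => θ (w - a)) := θ_diff.comp (by fun_prop)
  have han : AnalyticOnNhd ℂ (fun w => θ (w - a)) Set.univ := fun w _ =>
    hd.analyticAt w
  rcases (han z trivial).eventually_eq_zero_or_eventually_ne_zero with h | h
  · exfalso
    have := han.eqOn_zero_of_preconnected_of_eventuallyEq_zero isPreconnected_univ (trivial) h
    apply θ_deriv
    have e : θ = fun _ => 0 := by
      ext w
      have := this (x := w + a) trivial
      simpa using this
    rw [e]; simp
  · exact h

lemma F_per_one (k : ℂ) : Function.Periodic (F k) 1 := by
  intro z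
  simp only [F]
  rw [show z + 1 - zmap k = (z - zmap k) + 1 by ring, θ_add_one, θ_add_one]
  have : z + 1 - (starRingEnd ℂ) (z + 1) = z - (starRingEnd ℂ) z := by simp
  rw [this, mul_neg, neg_div_neg_eq]

lemma F_per_ω (k : ℂ) : Function.Periodic (F k) ω := by
  intro z
  simp only [F]
  rw [show z + ω - zmap k = (z - zmap k) + ω by ring, θ_add_ω, θ_add_ω]
  have e1 : Complex.exp (I / 2 * (z + ω - (starRingEnd ℂ) (z + ω)) * k) *
     Complex.exp (-(Real.pi : ℂ) * I * (ω + 2 * (z - zmap k))) =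
     Complex.exp (I / 2 * (z - (starRingEnd ℂ) z) * k) * Complex.exp (-(Real.pi : ℂ) * I * (ω + 2 * z)) := by
    rw [← Complex.exp_add, ← Complex.exp_add]
    congr 1
    have hpi : (Real.pi : ℂ) ≠ 0 := by exact_mod_cast Real.pi_ne_zero
    have e2 : (starRingEnd ℂ) ω = ω - Real.sqrt 3 * I := by
      apply Complex.ext
      · simp
      · simp [ω_im]; ring
    have e3 : 2 * Real.pi * I * zmap k = Real.sqrt 3 * k / 2 := by
      rw [zmap]; field_simp; ring
    rw [map_add, e2]
    linear_combination e3 + (Real.sqrt 3 * k / 2) * I_mul_I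
  have hne := Complex.exp_ne_zero (-(Real.pi : ℂ) * I * (ω + 2 * z))
  rw [mul_neg, neg_div_neg_eq, ← mul_assoc, e1]
  rw [mul_comm (Complex.exp (I / 2 * (z - (starRingEnd ℂ) z) * k)), mul_assoc, mul_div_mul_left _ _ hne]

lemma F_per (k : ℂ) {γ : ℂ} (h : inΛ γ) (z : ℂ) : F k (z + γ) = F k z := by
  obtain ⟨m, n, rfl⟩ := h
  have h1 := (F_per_one k).int_mul n
  have h2 := (F_per_ω k).int_mul m
  rw [mul_one] at h1
  exact (h2.add_period h1) z

lemma cont_zero {G : ℂ → ℂ} {z : ℂ} (hG : ContinuousAt G z)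
    (h : ∀ᶠ w in nhdsWithin z {z}ᶜ, G w = 0) : G z = 0 := by
  have h1 : Filter.Tendsto G (nhdsWithin z {z}ᶜ) (nhds (G z)) := hG.tendsto.mono_left nhdsWithin_le_nhds
  have h2 : Filter.Tendsto G (nhdsWithin z {z}ᶜ) (nhds 0) :=
    tendsto_const_nhds.congr' (h.mono fun w hw => hw.symm)
  exact tendsto_nhds_unique h1 h2

lemma glue (f : ℂ → ℂ) (h : ∀ z, ∃ g : ℂ → ℂ, AnalyticAt ℝ g z ∧ ∀ᶠ w in nhdsWithin z {z}ᶜ, f w = g w) :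
    ∃ v : ℂ → ℂ, RealAnalytic v ∧ ∀ z, ContinuousAt f z → v z = f z := by
  choose g hg he using h
  have key : ∀ z w, ContinuousAt (g z) w → (∀ᶠ x in nhdsWithin w {w}ᶜ, f x = g z x) →
      g w w = g z w := by
    intro z w hc hx
    have := cont_zero (G := fun x => g w x - g z x) (z := w) ((hg w).continuousAt.sub hc) ?_
    · exact sub_eq_zero.1 this
    · filter_upwards [hx, he w] with x h1 h2
      rw [← h1, ← h2, sub_self]
  refine ⟨fun z => g z z, ?_, ?_⟩
  · intro z
    refine (hg z).congr ?_
    have h1 := eventually_eventually_nhdsWithin.2 (he z)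
    rw [eventually_nhdsWithin_iff] at h1
    filter_upwards [h1, (hg z).eventually_analyticAt] with w hw1 hw2
    by_cases hwz : w = z
    · rw [hwz]
    · refine (key z w hw2.continuousAt ?_).symm
      have hn : nhdsWithin w {w}ᶜ ≤ nhdsWithin w {z}ᶜ := by
        rw [IsOpen.nhdsWithin_eq (s := {z}ᶜ) isOpen_compl_singleton (by simpa using hwz)]
        exact nhdsWithin_le_nhds
      exact (hw1 hwz).filter_mono hn
  · intro z hc
    have := cont_zero (G := fun x => g z x - f x) (z := z) ((hg z).continuousAt.sub hc) ?_
    · exact sub_eq_zero.1 this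
    · filter_upwards [he z] with x h1
      rw [h1, sub_self]

lemma F_split (k z₀ w : ℂ) : F k (w - z₀) = (Complex.exp (I / 2 * (w - z₀) * k) * θ (w - z₀ - zmap k) /
    θ (w - z₀)) * (fun s => Complex.exp (-(I / 2) * k * s)) (starRingEnd ℂ (w - z₀)) := by
  simp only [F]
  rw [show I / 2 * (w - z₀ - (starRingEnd ℂ) (w - z₀)) * k =
    I / 2 * (w - z₀) * k + (-(I / 2) * k * (starRingEnd ℂ) (w - z₀)) by ring, Complex.exp_add]
  ring

lemma anti_an (k z₀ z : ℂ) :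
    AnalyticAt ℝ (fun w => (fun s => Complex.exp (-(I / 2) * k * s)) (starRingEnd ℂ (w - z₀))) z := by
  have hc : AnalyticAt ℝ (fun w : ℂ => starRingEnd ℂ (w - z₀)) z := by
    have h1 : AnalyticAt ℝ (fun w : ℂ => w - z₀) z := by fun_prop
    exact ((conjCLE : ℂ →L[ℝ] ℂ).analyticAt _).comp h1
  have hd : Differentiable ℂ (fun s => Complex.exp (-(I / 2) * k * s)) := by fun_prop
  exact ((hd.analyticAt (starRingEnd ℂ (z - z₀))).restrictScalars (𝕜 := ℝ)).comp
    (f := fun w : ℂ => starRingEnd ℂ (w - z₀)) hc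

lemma holo_diff (k z₀ z : ℂ) (h : θ (z - z₀) ≠ 0) :
    DifferentiableAt ℂ (fun w => Complex.exp (I / 2 * (w - z₀) * k) * θ (w - z₀ - zmap k) /
    θ (w - z₀)) z := by
  have h1 : DifferentiableAt ℂ (fun w => θ (w - z₀)) z := (θ_diff.comp (by fun_prop)) z
  have h2 : DifferentiableAt ℂ (fun w => θ (w - z₀ - zmap k)) z :=
    (θ_diff.comp (f := fun w => w - z₀ - zmap k) (by fun_prop)) z
  have h3 : DifferentiableAt ℂ (fun w => Complex.exp (I / 2 * (w - z₀) * k)) z := by fun_prop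
  exact (h3.mul h2).div h1 h

lemma θ_ev (z₀ z : ℂ) (h : θ (z - z₀) ≠ 0) : ∀ᶠ w in nhds z, θ (w - z₀) ≠ 0 := by
  have : Continuous (fun w => θ (w - z₀)) := θ_diff.continuous.comp (by fun_prop)
  exact this.continuousAt.eventually_ne h

lemma F_an (k z₀ z : ℂ) (h : θ (z - z₀) ≠ 0) : AnalyticAt ℝ (fun w => F k (w - z₀)) z := by
  simp only [F_split]
  refine AnalyticAt.mul ?_ (anti_an k z₀ z)
  refine AnalyticAt.restrictScalars (𝕜' := ℂ) ?_
  rw [Complex.analyticAt_iff_eventually_differentiableAt]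
  filter_upwards [θ_ev z₀ z h] with w hw
  exact holo_diff k z₀ w hw

lemma F_dbar (k z₀ z : ℂ) (h : θ (z - z₀) ≠ 0) :
    Dbar2 (fun w => F k (w - z₀)) z = -k * F k (z - z₀) := by
  simp only [F_split]
  have hd : Differentiable ℂ (fun s => Complex.exp (-(I / 2) * k * s)) := by fun_prop
  have hder : deriv (fun s => Complex.exp (-(I / 2) * k * s)) (starRingEnd ℂ (z - z₀)) =
      Complex.exp (-(I / 2) * k * (starRingEnd ℂ (z - z₀))) * (-(I / 2) * k) := by
    have := ((hasDerivAt_id (starRingEnd ℂ (z - z₀))).const_mul (-(I / 2) * k)).cexp.deriv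
    simpa using this
  have e := dbar_mul ((holo_diff k z₀ z h).restrictScalars ℝ) (anti_an k z₀ z).differentiableAt
  refine e.trans ?_
  rw [dbar_holo (holo_diff k z₀ z h), dbar_antiholo (k := fun s => Complex.exp (-(I / 2) * k * s)) (hd _), hder]
  linear_combination (Complex.exp (I / 2 * (z - z₀) * k) * θ (z - z₀ - zmap k) /
    θ (z - z₀)) * Complex.exp (-(I / 2) * k * (starRingEnd ℂ (z - z₀))) * k * I_mul_I

lemma neg_inΛ {γ : ℂ} (h : inΛ γ) : inΛ (-γ) := by
  obtain ⟨m, n, rfl⟩ := h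
  exact ⟨-m, -n, by push_cast; ring⟩

lemma extend (k z₀ : ℂ) (u : ℂ → ℂ) (hu : RealAnalytic u) (c : ℂ → ℂ)
    (hFl : ∀ γ, inΛ γ → ∀ z, u (z + γ) = c γ * u z)
    (hdiv : ∃ g : ℂ → ℂ, AnalyticAt ℝ g z₀ ∧ ∀ᶠ z in nhds z₀, u z = (z - z₀) * g z) :
    ∃ v : ℂ → ℂ, RealAnalytic v ∧
      (∀ z, θ (z - z₀) ≠ 0 → ∀ᶠ w in nhds z, v w = F k (w - z₀) * u w) ∧
      (∀ γ, inΛ γ → ∀ z, v (z + γ) = c γ * v z) ∧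
      ((∀ z, v z = 0) → ∀ z, u z = 0) := by
  have hgood : ∀ z, θ (z - z₀) ≠ 0 → AnalyticAt ℝ (fun w => F k (w - z₀) * u w) z :=
    fun z hz => (F_an k z₀ z hz).mul (hu z)
  have hz0 : ∃ g : ℂ → ℂ, AnalyticAt ℝ g z₀ ∧ ∀ᶠ w in nhdsWithin z₀ {z₀}ᶜ,
      F k (w - z₀) * u w = g w := by
    obtain ⟨g, hg, he⟩ := hdiv
    have hds : Differentiable ℂ (dslope θ 0) := by
      intro w
      have := (Complex.differentiableOn_dslope (f := θ) (c := 0) (s := Set.univ) Filter.univ_mem).2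
        θ_diff.differentiableOn
      exact this.differentiableAt Filter.univ_mem
    have hds' : Differentiable ℂ (fun w => dslope θ 0 (w - z₀)) := hds.comp (by fun_prop)
    have h2 : Differentiable ℂ (fun w => θ (w - z₀ - zmap k)) :=
      θ_diff.comp (f := fun w => w - z₀ - zmap k) (by fun_prop)
    have h3 : Differentiable ℂ (fun w => Complex.exp (I / 2 * (w - z₀) * k)) := by fun_prop
    refine ⟨fun w => (Complex.exp (I / 2 * (w - z₀) * k) * θ (w - z₀ - zmap k) / dslope θ 0 (w - z₀)) *
      (fun s => Complex.exp (-(I / 2) * k * s)) (starRingEnd ℂ (w - z₀)) * g w, ?_, ?_⟩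
    · refine AnalyticAt.mul (AnalyticAt.mul ?_ (anti_an k z₀ z₀)) hg
      refine AnalyticAt.restrictScalars (𝕜' := ℂ) ?_
      refine ((h3.analyticAt _).mul (h2.analyticAt _)).div (hds'.analyticAt _) ?_
      simpa using θ_deriv
    · filter_upwards [he.filter_mono nhdsWithin_le_nhds, self_mem_nhdsWithin] with w hw hne
      have hne' : w - z₀ ≠ 0 := sub_ne_zero.2 hne
      rw [F_split, hw, dslope_of_ne _ hne', slope_def_field, θ_zero, sub_zero, sub_zero]
      field_simp
  have hloc : ∀ z, ∃ g : ℂ → ℂ, AnalyticAt ℝ g z ∧ ∀ᶠ w in nhdsWithin z {z}ᶜ,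
      F k (w - z₀) * u w = g w := by
    intro z
    by_cases hz : θ (z - z₀) = 0
    · have hΛ : inΛ (z - z₀) := by
        by_contra hc
        exact θ_ne hc hz
      obtain ⟨g, hg, he⟩ := hz0
      refine ⟨fun w => c (z - z₀) * g (w - (z - z₀)), ?_, ?_⟩
      · refine analyticAt_const.mul ?_
        refine AnalyticAt.fun_comp (g := g) (f := fun w => w - (z - z₀)) ?_ (by fun_prop)
        simpa using hg
      · have t : Filter.Tendsto (fun w : ℂ => w - (z - z₀)) (nhdsWithin z {z}ᶜ) (nhdsWithin z₀ {z₀}ᶜ) := by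
          apply tendsto_nhdsWithin_of_tendsto_nhds_of_eventually_within
          · have : Continuous (fun w : ℂ => w - (z - z₀)) := by fun_prop
            have := this.tendsto z
            simp only [sub_sub_cancel] at this
            exact this.mono_left nhdsWithin_le_nhds
          · filter_upwards [self_mem_nhdsWithin] with w hw
            intro h
            apply hw
            simp only [Set.mem_singleton_iff] at h ⊢
            linear_combination h
        filter_upwards [t.eventually he] with w hw
        rw [← hw]
        have e1 := F_per k hΛ (w - (z - z₀) - z₀)
        have e2 := hFl _ hΛ (w - (z - z₀))
        rw [show w - (z - z₀) - z₀ + (z - z₀) = w - z₀ by ring] at e1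
        rw [show w - (z - z₀) + (z - z₀) = w by ring] at e2
        rw [e1, e2]
        ring
    · exact ⟨_, hgood z hz, Filter.Eventually.of_forall fun _ => rfl⟩
  obtain ⟨v, hv, hve⟩ := glue _ hloc
  have hvf : ∀ z, θ (z - z₀) ≠ 0 → v z = F k (z - z₀) * u z :=
    fun z hz => hve z (hgood z hz).continuousAt
  refine ⟨v, hv, ?_, ?_, ?_⟩
  · intro z hz
    filter_upwards [θ_ev z₀ z hz] with w hw
    exact hvf w hw
  · intro γ hγ z
    have hc : ContinuousAt (fun w => v (w + γ) - c γ * v w) z := by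
      have hcv : Continuous v := continuous_iff_continuousAt.2 fun z => (hv z).continuousAt
      fun_prop
    have := cont_zero hc ?_
    · exact sub_eq_zero.1 this
    · filter_upwards [θ_ev_ne z₀ z, θ_ev_ne (z₀ - γ) z] with w h1 h2
      have h2' : θ (w + γ - z₀) ≠ 0 := by
        rwa [show w + γ - z₀ = w - (z₀ - γ) by ring]
      rw [hvf w h1, hvf _ h2', hFl γ hγ, show w + γ - z₀ = w - z₀ + γ by ring, F_per k hγ]
      ring
  · intro h0 z
    refine cont_zero (hu z).continuousAt ?_
    filter_upwards [θ_ev_ne z₀ z, θ_ev_ne (z₀ + zmap k) z] with w h1 h2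
    have := hvf w h1
    rw [h0 w] at this
    have hF : F k (w - z₀) ≠ 0 := by
      simp only [F]
      rw [show w - z₀ - zmap k = w - (z₀ + zmap k) by ring]
      exact div_ne_zero (mul_ne_zero (Complex.exp_ne_zero _) h2) h1
    exact (mul_eq_zero.1 this.symm).resolve_left hF

lemma eq_ext (k z₀ : ℂ) (u v R S : ℂ → ℂ) (κ : ℂ) (hu : RealAnalytic u) (hv : RealAnalytic v)
    (hS : RealAnalytic S)
    (he : ∀ z, Dbar2 u z + R z + κ * u z = 0)
    (hvu : ∀ z, θ (z - z₀) ≠ 0 → ∀ᶠ w in nhds z, v w = F k (w - z₀) * u w)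
    (hSR : ∀ z, θ (z - z₀) ≠ 0 → S z = F k (z - z₀) * R z) (z : ℂ) :
    Dbar2 v z + S z + (κ + k) * v z = 0 := by
  have han : AnalyticAt ℝ (fun z => Dbar2 v z + S z + (κ + k) * v z) z :=
    ((dbar_analytic (hv z)).add (hS z)).add (analyticAt_const.mul (hv z))
  refine cont_zero (G := fun z => Dbar2 v z + S z + (κ + k) * v z) han.continuousAt ?_
  filter_upwards [θ_ev_ne z₀ z] with w hw
  have e1 : v w = F k (w - z₀) * u w := (hvu w hw).self_of_nhds
  have e2 := (dbar_congr (hvu w hw)).self_of_nhds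
  rw [dbar_mul (F_an k z₀ w hw).differentiableAt (hu w).differentiableAt, F_dbar k z₀ w hw] at e2
  rw [e1, e2, hSR w hw]
  linear_combination F k (w - z₀) * he w

theorem stmt6 (U : ℂ → ℂ) (hUan : RealAnalytic U)
    (hU1 : ∀ γ : ℂ, inΛ γ → ∀ z : ℂ,
      U (z + γ) = Complex.exp (Complex.I * (pairing γ Kpt : ℂ)) * U z)
    (hU2 : ∀ z : ℂ, U (ω * z) = ω * U z)
    (α : ℂ) (u₁ u₂ : ℂ → ℂ) (hu₁an : RealAnalytic u₁) (hu₂an : RealAnalytic u₂)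
    (heq1 : ∀ z : ℂ, Dbar2 u₁ z + α * U z * u₂ z + Kpt * u₁ z = 0)
    (heq2 : ∀ z : ℂ, α * U (-z) * u₁ z + Dbar2 u₂ z + Kpt * u₂ z = 0)
    (hFl1 : ∀ γ : ℂ, inΛ γ → ∀ z : ℂ,
      u₁ (z + γ) = Complex.exp (-Complex.I * (pairing γ Kpt : ℂ)) * u₁ z)
    (hFl2 : ∀ γ : ℂ, inΛ γ → ∀ z : ℂ,
      u₂ (z + γ) = Complex.exp (Complex.I * (pairing γ Kpt : ℂ)) * u₂ z)
    (z₀ : ℂ) (hz₀ : u₁ z₀ = 0 ∧ u₂ z₀ = 0) :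
    ∀ k : ℂ, ∃ v₁ v₂ : ℂ → ℂ,
      RealAnalytic v₁ ∧ RealAnalytic v₂ ∧
      (∀ z : ℂ, ¬ inΛ (z - z₀) →
        v₁ z = F k (z - z₀) * u₁ z ∧ v₂ z = F k (z - z₀) * u₂ z) ∧
      (∀ z : ℂ, Dbar2 v₁ z + α * U z * v₂ z + (Kpt + k) * v₁ z = 0) ∧
      (∀ z : ℂ, α * U (-z) * v₁ z + Dbar2 v₂ z + (Kpt + k) * v₂ z = 0) ∧
      (∀ γ : ℂ, inΛ γ → ∀ z : ℂ,
        v₁ (z + γ) = Complex.exp (-Complex.I * (pairing γ Kpt : ℂ)) * v₁ z) ∧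
      (∀ γ : ℂ, inΛ γ → ∀ z : ℂ,
        v₂ (z + γ) = Complex.exp (Complex.I * (pairing γ Kpt : ℂ)) * v₂ z) ∧
      (¬ (∀ z : ℂ, u₁ z = 0 ∧ u₂ z = 0) → ¬ (∀ z : ℂ, v₁ z = 0 ∧ v₂ z = 0)) := by
  intro k
  have hU' : RealAnalytic (fun z => U (-z)) := fun z =>
    AnalyticAt.fun_comp (g := U) (f := fun z => -z) (hUan (-z)) (by fun_prop)
  obtain ⟨d1, d2⟩ := sys_divis (fun z => α * U z) (fun z => α * U (-z)) u₁ u₂ Kpt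
    (fun z => analyticAt_const.mul (hUan z)) (fun z => analyticAt_const.mul (hU' z))
    hu₁an hu₂an heq1 heq2 z₀ hz₀
  obtain ⟨v₁, hv1, a1, b1, c1⟩ := extend k z₀ u₁ hu₁an
    (fun γ => Complex.exp (-Complex.I * (pairing γ Kpt : ℂ))) hFl1 d1
  obtain ⟨v₂, hv2, a2, b2, c2⟩ := extend k z₀ u₂ hu₂an
    (fun γ => Complex.exp (Complex.I * (pairing γ Kpt : ℂ))) hFl2 d2
  refine ⟨v₁, v₂, hv1, hv2, ?_, ?_, ?_, b1, b2, ?_⟩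
  · intro z hz
    exact ⟨(a1 z (θ_ne hz)).self_of_nhds, (a2 z (θ_ne hz)).self_of_nhds⟩
  · refine eq_ext k z₀ u₁ v₁ (fun z => α * U z * u₂ z) (fun z => α * U z * v₂ z) Kpt hu₁an hv1
      (fun z => (analyticAt_const.mul (hUan z)).mul (hv2 z)) heq1 a1 ?_
    intro z hz
    rw [(a2 z hz).self_of_nhds]
    ring
  · intro z
    have := eq_ext k z₀ u₂ v₂ (fun z => α * U (-z) * u₁ z) (fun z => α * U (-z) * v₁ z) Kpt hu₂an hv2
      (fun z => (analyticAt_const.mul (hU' z)).mul (hv1 z))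
      (fun z => by linear_combination heq2 z) a2 (by
        intro z hz
        rw [(a1 z hz).self_of_nhds]
        ring) z
    linear_combination this
  · intro hne h0
    exact hne fun z => ⟨c1 (fun w => (h0 w).1) z, c2 (fun w => (h0 w).2) z⟩

end
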